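/- The Fréchet (cofinite) filter on ℕ is a p-filter: whenever N belongs to the cofinite filter and Z is admissible for N, the set N \ Z is still cofinite. -/

import Mathlib

/-- `H` is an order-convex subset of `N`: it is contained in `N` and contains every
natural number lying strictly between two of its elements. -/
def OrdConnIn (N H : Set ℕ) : Prop :=
  H ⊆ N ∧ ∀ i ∈ H, ∀ j ∈ H, ∀ k : ℕ, i < k → k < j → k ∈ H

/-- `H` is a pile of `N`: a maximal order-convex subset of `N`. -/
def IsPile (N H : Set ℕ) : Prop :=
  OrdConnIn N H ∧ ∀ H' : Set ℕ, OrdConnIn N H' → H ⊆ H' → H' = H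

/-- `Z` is admissible for `N`: there is a uniform bound `k` such that every pile of `N`
meets `Z` in a finite set of cardinality at most `k`. -/
def Admissible (N Z : Set ℕ) : Prop :=
  ∃ k : ℕ, ∀ H : Set ℕ, IsPile N H → (H ∩ Z).Finite ∧ (H ∩ Z).ncard ≤ k

/-- A filter `σ` on `ℕ` is a p-filter if whenever `N ∈ σ` and `Z` is admissible for `N`,
also `N \ Z ∈ σ`. -/
def IsPFilter (σ : Filter ℕ) : Prop :=
  ∀ N ∈ σ, ∀ Z : Set ℕ, Admissible N Z → N \ Z ∈ σ

open Filter Set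

lemma ordConnIn_iff {N H : Set ℕ} : OrdConnIn N H ↔ H ⊆ N ∧ H.OrdConnected :=
  and_congr_right fun _ ↦
    ⟨fun h ↦ ordConnected_of_Ioo fun i hi j hj _ k hk ↦ h i hi j hj k hk.1 hk.2,
      fun h _ hi _ hj _ hik hkj ↦ h.out hi hj ⟨hik.le, hkj.le⟩⟩

lemma isPile_ordConnectedComponent {N : Set ℕ} {n : ℕ} (hn : n ∈ N) :
    IsPile N (N.ordConnectedComponent n) := by
  refine ⟨ordConnIn_iff.2 ⟨ordConnectedComponent_subset, inferInstance⟩, fun H hH hsub ↦ ?_⟩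
  obtain ⟨hHN, hHconn⟩ := ordConnIn_iff.1 hH
  have hnH : n ∈ H := hsub (self_mem_ordConnectedComponent.2 hn)
  exact (subset_ordConnectedComponent hnH hHN).antisymm hsub

lemma exists_isPile_mem_cofinite {N : Set ℕ} (hN : N ∈ (cofinite : Filter ℕ)) :
    ∃ H, IsPile N H ∧ H ∈ (cofinite : Filter ℕ) := by
  rw [Nat.cofinite_eq_atTop] at hN ⊢
  obtain ⟨m, hm⟩ := mem_atTop_sets.1 hN
  have hsub : Ici m ⊆ N.ordConnectedComponent m := subset_ordConnectedComponent self_mem_Ici hm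
  exact ⟨_, isPile_ordConnectedComponent (hm m le_rfl), mem_of_superset (Ici_mem_atTop m) hsub⟩

theorem cofinite_isPFilter_general {N Z : Set ℕ} (hN : N ∈ (cofinite : Filter ℕ))
    (hZ : ∀ H, IsPile N H → (H ∩ Z).Finite) : N \ Z ∈ (cofinite : Filter ℕ) := by
  obtain ⟨H, hH, hHcof⟩ := exists_isPile_mem_cofinite hN
  filter_upwards [hHcof, (hZ H hH).compl_mem_cofinite] with n hnH hnZ
  exact ⟨hH.1.1 hnH, fun hn ↦ hnZ ⟨hnH, hn⟩⟩

/-- The cofinite (Fréchet) filter on `ℕ` is a p-filter. -/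
theorem cofinite_isPFilter : IsPFilter (Filter.cofinite : Filter ℕ) :=
  fun _ hN _ ⟨_, hk⟩ ↦ cofinite_isPFilter_general hN fun H hH ↦ (hk H hH).1
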